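/- There is no finite axiomatization E over closed BCCSP terms that is both sound and ground-complete for BCCSP(A) modulo (concrete) impossible futures equivalence. -/

import Mathlib

/-!
Write `a^n` for the term `npre a n nil`. The equation
`a a^{2m} + a (a^m + a^{2m}) ≈ a (a^m + a^{2m})` is sound modulo impossible futures equivalence
for every `m`, yet a sound set of axioms all of whose terms have depth less than `m` cannot
derive it.

Say that `p` *terminates after `n` steps* (`Ter n p`) when some trace of length `n` leads from `p`
to a state without transitions, and that `p` is *bad* if it has a transition to some `p'` that does
not terminate after `m` steps. The left-hand side is bad and the right-hand side is not. Call `p`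
*sparse* if it can only terminate after `0`, `m + 1` or `2m + 1` steps. Sparseness is
invariant under impossible futures equivalence and inherited by summands, and the right-hand side
is sparse. It is shown that derivable equations between sparse closed terms preserve badness
(`Deriv.bad_iff`). The congruence rules are harmless: for prefixing, termination after `m` steps
is an impossible future.

The heart is a closed instance `σ t ≈ σ u` of an axiom (`bad_of_instance`). If the bad transition of
`σ t` comes from a variable summand `x` of `t`, then `x` is also a summand of `u`
(`occ_zero_of_sound`). Otherwise it is `σ t'` with `t → t'`, and soundness yields `u → u'` such that
all variables of `u'` occur in `t'` (`exists_step_of_sound`). If `σ u'` terminates after `m` steps,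
then, `m` exceeding the depth of `u'`, this happens inside some `σ y` with `y` at some depth `j` in
`u'`, so `σ y` terminates after `m - j` steps. As `y` occurs in `t'`, at depth `j'` say, `σ t'`
terminates after `m - j + j'` steps; by sparseness this number is `m` or `2m`, and since `j' < m`
it must be `m`, contradicting badness. Hence `σ u` is bad as well.
-/

/-- BCCSP terms over concrete actions `A` and variables `V` (no τ prefix). -/
inductive TmP (A V : Type) : Type
  | nil : TmP A V
  | var : V → TmP A V
  | plus : TmP A V → TmP A V → TmP A V
  | pre : A → TmP A V → TmP A V

namespace TmP

variable {A V : Type}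

/-- The operational semantics of BCCSP. -/
inductive Step : TmP A V → A → TmP A V → Prop
  | pre (a : A) (t : TmP A V) : Step (.pre a t) a t
  | plusL {t : TmP A V} {a : A} {t' : TmP A V} (u : TmP A V) :
      Step t a t' → Step (.plus t u) a t'
  | plusR (t : TmP A V) {u : TmP A V} {a : A} {u' : TmP A V} :
      Step u a u' → Step (.plus t u) a u'

/-- Traces leading to a state. -/
inductive TraceTo : TmP A V → List A → TmP A V → Prop
  | refl (t : TmP A V) : TraceTo t [] t
  | act {t : TmP A V} {a : A} {t' : TmP A V} {w : List A} {u : TmP A V} :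
      Step t a t' → TraceTo t' w u → TraceTo t (a :: w) u

/-- The set of traces of a term. -/
def T (t : TmP A V) : Set (List A) := {w | ∃ t', TraceTo t w t'}

/-- `(w, B)` is an impossible future of `t`. -/
def ImpFut (t : TmP A V) (w : List A) (B : Set (List A)) : Prop :=
  ∃ t', TraceTo t w t' ∧ ∀ s ∈ T t', s ∉ B

/-- The impossible futures preorder. -/
def IFle (p q : TmP A V) : Prop := ∀ w B, ImpFut p w B → ImpFut q w B

/-- Impossible futures equivalence. -/
def IFeq (p q : TmP A V) : Prop := IFle p q ∧ IFle q p

/-- The variables occurring in a term. -/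
def vars : TmP A V → Set V
  | nil => ∅
  | var x => {x}
  | plus t u => vars t ∪ vars u
  | pre _ t => vars t

/-- A term is closed if it contains no variables. -/
def Closed (t : TmP A V) : Prop := vars t = ∅

/-- Substitution. -/
def subst (σ : V → TmP A V) : TmP A V → TmP A V
  | nil => nil
  | var x => σ x
  | plus t u => plus (subst σ t) (subst σ u)
  | pre a t => pre a (subst σ t)

/-- `n`-fold prefixing with the action `a`. -/
def npre (a : A) : ℕ → TmP A V → TmP A V
  | 0, t => t
  | n + 1, t => pre a (npre a n t)

/-- Finite sums of terms. -/
def listSum : List (TmP A V) → TmP A V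
  | [] => nil
  | t :: l => plus t (listSum l)

/-- The axioms A1-4 + IF1 + IF2 (as instantiation-closed schemas; equational
axioms are listed in both directions for inequational derivability). -/
inductive AXIF : TmP A V → TmP A V → Prop
  | A1 (t u : TmP A V) : AXIF (.plus t u) (.plus u t)
  | A2 (t u v : TmP A V) : AXIF (.plus (.plus t u) v) (.plus t (.plus u v))
  | A2r (t u v : TmP A V) : AXIF (.plus t (.plus u v)) (.plus (.plus t u) v)
  | A3 (t : TmP A V) : AXIF (.plus t t) t
  | A3r (t : TmP A V) : AXIF t (.plus t t)
  | A4 (t : TmP A V) : AXIF (.plus t .nil) t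
  | A4r (t : TmP A V) : AXIF t (.plus t .nil)
  | IF1 (a : A) (t u : TmP A V) :
      AXIF (.pre a (.plus t u)) (.plus (.pre a t) (.pre a u))
  | IF2 (a : A) (t u v : TmP A V) :
      AXIF (.plus (.pre a t) (.pre a (.plus u v)))
           (.plus (.pre a (.plus t u)) (.plus (.pre a t) (.pre a (.plus u v))))
  | IF2r (a : A) (t u v : TmP A V) :
      AXIF (.plus (.pre a (.plus t u)) (.plus (.pre a t) (.pre a (.plus u v))))
           (.plus (.pre a t) (.pre a (.plus u v)))

/-- Equational derivability from an axiomatization `E`. -/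
inductive Deriv (E : TmP A V → TmP A V → Prop) : TmP A V → TmP A V → Prop
  | ax {t u : TmP A V} : E t u → Deriv E t u
  | inst {t u : TmP A V} (σ : V → TmP A V) : E t u → Deriv E (subst σ t) (subst σ u)
  | refl (t : TmP A V) : Deriv E t t
  | symm {t u : TmP A V} : Deriv E t u → Deriv E u t
  | trans {t u v : TmP A V} : Deriv E t u → Deriv E u v → Deriv E t v
  | pre (a : A) {t u : TmP A V} : Deriv E t u → Deriv E (.pre a t) (.pre a u)
  | plus {t u t' u' : TmP A V} :
      Deriv E t t' → Deriv E u u' → Deriv E (.plus t u) (.plus t' u')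

/-- Inequational derivability from an axiomatization `E` (no symmetry). -/
inductive IDeriv (E : TmP A V → TmP A V → Prop) : TmP A V → TmP A V → Prop
  | ax {t u : TmP A V} : E t u → IDeriv E t u
  | inst {t u : TmP A V} (σ : V → TmP A V) : E t u → IDeriv E (subst σ t) (subst σ u)
  | refl (t : TmP A V) : IDeriv E t t
  | trans {t u v : TmP A V} : IDeriv E t u → IDeriv E u v → IDeriv E t v
  | pre (a : A) {t u : TmP A V} : IDeriv E t u → IDeriv E (.pre a t) (.pre a u)
  | plus {t u t' u' : TmP A V} :
      IDeriv E t t' → IDeriv E u u' → IDeriv E (.plus t u) (.plus t' u')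

end TmP


namespace TmP

variable {A V : Type}

/-! ### Substitution and derivability -/

theorem closed_subst {σ : V → TmP A V} (hσ : ∀ x, Closed (σ x)) (t : TmP A V) :
    Closed (subst σ t) := by
  induction t with
  | nil => rfl
  | var x => exact hσ x
  | plus t u iht ihu =>
    simp only [Closed, subst, vars, Set.union_empty_iff] at *
    exact ⟨iht, ihu⟩
  | pre a t ih => simpa [Closed, subst, vars] using ih

theorem subst_of_closed (σ : V → TmP A V) {t : TmP A V} (h : Closed t) : subst σ t = t := by
  induction t with
  | nil => rfl
  | var x => simp [Closed, vars] at h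
  | plus t u iht ihu =>
    simp only [Closed, vars, Set.union_empty_iff] at *
    simp [subst, iht h.1, ihu h.2]
  | pre a t ih =>
    simp only [Closed, vars] at *
    simp [subst, ih h]

theorem subst_subst (σ τ : V → TmP A V) (t : TmP A V) :
    subst σ (subst τ t) = subst (fun x => subst σ (τ x)) t := by
  induction t with
  | nil => rfl
  | var x => rfl
  | plus t u iht ihu => simp [subst, iht, ihu]
  | pre a t ih => simp [subst, ih]

theorem Deriv.map_subst {E : TmP A V → TmP A V → Prop} {t u : TmP A V} (h : Deriv E t u)
    (σ : V → TmP A V) : Deriv E (subst σ t) (subst σ u) := by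
  induction h with
  | ax h => exact .inst σ h
  | inst τ h => rw [subst_subst, subst_subst]; exact .inst _ h
  | refl t => exact .refl _
  | symm _ ih => exact ih.symm
  | trans _ _ ih₁ ih₂ => exact ih₁.trans ih₂
  | pre a _ ih => exact .pre a ih
  | plus _ _ ih₁ ih₂ => exact .plus ih₁ ih₂

/-! ### Depth and termination -/

/-- The number of nested prefixes of a term; a variable has depth `0`. -/
def depth : TmP A V → ℕ
  | nil => 0
  | var _ => 0
  | plus t u => max (depth t) (depth u)
  | pre _ t => depth t + 1

/-- `Occ t x j`: the variable `x` occurs in `t` under exactly `j` prefixes. In particular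
`Occ t x 0` says that `x` is a summand of `t`. -/
def Occ : TmP A V → V → ℕ → Prop
  | nil, _, _ => False
  | var y, x, j => y = x ∧ j = 0
  | plus t u, x, j => Occ t x j ∨ Occ u x j
  | pre _ t, x, j => ∃ i, j = i + 1 ∧ Occ t x i

/-- `Ter n p`: the term `p` can reach a state without transitions in exactly `n` steps. -/
def Ter : ℕ → TmP A V → Prop
  | 0, p => ∀ a q, ¬ Step p a q
  | n + 1, p => ∃ a q, Step p a q ∧ Ter n q

theorem not_step_nil {a : A} {q : TmP A V} : ¬ Step nil a q := nofun

theorem step_pre_iff {a b : A} {p q : TmP A V} : Step (pre a p) b q ↔ b = a ∧ q = p := by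
  constructor
  · rintro ⟨⟩; exact ⟨rfl, rfl⟩
  · rintro ⟨rfl, rfl⟩; exact .pre _ _

theorem step_plus_iff {b : A} {p q r : TmP A V} :
    Step (plus p q) b r ↔ Step p b r ∨ Step q b r := by
  constructor
  · rintro (_ | ⟨_, h⟩ | ⟨_, h⟩)
    · exact .inl h
    · exact .inr h
  · rintro (h | h)
    · exact .plusL _ h
    · exact .plusR _ h

theorem traceTo_nil_iff {p q : TmP A V} : TraceTo p [] q ↔ q = p := by
  constructor
  · rintro ⟨⟩; rfl
  · rintro rfl; exact .refl _

theorem traceTo_cons_iff {p q : TmP A V} {a : A} {w : List A} :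
    TraceTo p (a :: w) q ↔ ∃ r, Step p a r ∧ TraceTo r w q := by
  constructor
  · rintro (_ | ⟨h, h'⟩); exact ⟨_, h, h'⟩
  · rintro ⟨r, h, h'⟩; exact .act h h'

theorem nil_mem_T (p : TmP A V) : [] ∈ T p := ⟨p, .refl p⟩

theorem cons_mem_T {p : TmP A V} {a : A} {w : List A} :
    a :: w ∈ T p ↔ ∃ r, Step p a r ∧ w ∈ T r := by
  simp only [T, Set.mem_ofPred_eq, traceTo_cons_iff]
  constructor
  · rintro ⟨q, r, h, h'⟩; exact ⟨r, h, q, h'⟩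
  · rintro ⟨r, h, q, h'⟩; exact ⟨q, r, h, h'⟩

theorem Step.depth_lt {p q : TmP A V} {a : A} (h : Step p a q) : depth q + 1 ≤ depth p := by
  induction h with
  | pre a t => exact le_rfl
  | plusL u _ ih => simp only [depth]; omega
  | plusR t _ ih => simp only [depth]; omega

theorem length_le_depth {p : TmP A V} {w : List A} (h : w ∈ T p) : w.length ≤ depth p := by
  induction w generalizing p with
  | nil => simp
  | cons a w ih =>
    obtain ⟨r, h, h'⟩ := cons_mem_T.1 h
    have := ih h'
    have := h.depth_lt
    simp only [List.length_cons]; omega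

theorem exists_step_depth {p : TmP A V} {n : ℕ} (h : depth p = n + 1) :
    ∃ a q, Step p a q ∧ depth q = n := by
  induction p with
  | nil => simp [depth] at h
  | var x => simp [depth] at h
  | plus t u iht ihu =>
    simp only [depth] at h
    rcases max_choice (depth t) (depth u) with h' | h' <;> rw [h'] at h
    · obtain ⟨a, q, hs, hq⟩ := iht h
      exact ⟨a, q, .plusL _ hs, hq⟩
    · obtain ⟨a, q, hs, hq⟩ := ihu h
      exact ⟨a, q, .plusR _ hs, hq⟩
  | pre a t _ => exact ⟨a, t, .pre a t, by simpa [depth] using h⟩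

theorem exists_trace_depth (p : TmP A V) : ∃ w ∈ T p, w.length = depth p := by
  generalize hn : depth p = n
  induction n generalizing p with
  | zero => exact ⟨[], nil_mem_T p, rfl⟩
  | succ n ih =>
    obtain ⟨a, q, hs, hq⟩ := exists_step_depth hn
    obtain ⟨w, hw, hl⟩ := ih q hq
    exact ⟨a :: w, cons_mem_T.2 ⟨q, hs, hw⟩, by simp [hl]⟩

/-- Termination after `n` steps is an impossible future: after some trace of length `n`, all
nonempty traces are impossible. -/
theorem ter_iff {n : ℕ} {p : TmP A V} :
    Ter n p ↔ ∃ w : List A, w.length = n ∧ ImpFut p w {s | s ≠ []} := by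
  induction n generalizing p with
  | zero =>
    constructor
    · intro h
      refine ⟨[], rfl, p, .refl p, ?_⟩
      rintro (_ | ⟨a, s⟩) hs
      · simp
      · obtain ⟨r, hr, _⟩ := cons_mem_T.1 hs
        exact absurd hr (h a r)
    · rintro ⟨w, hw, q, hq, hB⟩ a r hr
      obtain rfl := List.length_eq_zero_iff.1 hw
      obtain rfl := traceTo_nil_iff.1 hq
      exact hB [a] (cons_mem_T.2 ⟨r, hr, nil_mem_T r⟩) (by simp)
  | succ n ih =>
    constructor
    · rintro ⟨a, q, hs, hq⟩
      obtain ⟨w, hw, r, hr, hB⟩ := ih.1 hq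
      exact ⟨a :: w, by simp [hw], r, .act hs hr, hB⟩
    · rintro ⟨_ | ⟨a, w⟩, hw, r, hr, hB⟩
      · simp at hw
      · obtain ⟨q, hs, hq⟩ := traceTo_cons_iff.1 hr
        exact ⟨a, q, hs, ih.2 ⟨w, by simpa using hw, r, hq, hB⟩⟩

theorem IFeq.ter_iff {p q : TmP A V} (h : IFeq p q) (n : ℕ) : Ter n p ↔ Ter n q := by
  rw [TmP.ter_iff, TmP.ter_iff]
  exact ⟨fun ⟨w, hw, hi⟩ => ⟨w, hw, h.1 _ _ hi⟩, fun ⟨w, hw, hi⟩ => ⟨w, hw, h.2 _ _ hi⟩⟩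

theorem ter_succ_plus {n : ℕ} {p q : TmP A V} :
    Ter (n + 1) (plus p q) ↔ Ter (n + 1) p ∨ Ter (n + 1) q := by
  simp only [Ter, step_plus_iff, or_and_right, exists_or]

theorem ter_succ_pre {n : ℕ} {a : A} {p : TmP A V} : Ter (n + 1) (pre a p) ↔ Ter n p := by
  simp [Ter, step_pre_iff]

theorem not_ter_zero_pre {a : A} {p : TmP A V} : ¬ Ter 0 (pre a p) :=
  fun h => h a p (.pre a p)

theorem ter_npre {a : A} {n k : ℕ} : Ter k (npre a n (nil : TmP A V)) ↔ k = n := by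
  induction n generalizing k with
  | zero =>
    cases k with
    | zero => simp [Ter, npre, not_step_nil]
    | succ k => simp [Ter, npre, not_step_nil]
  | succ n ih =>
    cases k with
    | zero => simpa [npre] using not_ter_zero_pre
    | succ k => simp [npre, ter_succ_pre, ih]

theorem depth_npre (a : A) (n : ℕ) : depth (npre a n (nil : TmP A V)) = n := by
  induction n with
  | zero => rfl
  | succ n ih => simp [npre, depth, ih]

/-! ### Behaviour of substitution instances -/

theorem Occ.le_depth {s : TmP A V} {x : V} {j : ℕ} (h : Occ s x j) : j ≤ depth s := by
  induction s generalizing j with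
  | nil => exact h.elim
  | var y => exact h.2.le
  | plus t u iht ihu =>
    simp only [depth]
    rcases h with h | h
    · have := iht h; omega
    · have := ihu h; omega
  | pre a t ih =>
    obtain ⟨i, rfl, h⟩ := h
    have := ih h
    simp only [depth]; omega

theorem Occ.of_step {s s' : TmP A V} {b : A} (hs : Step s b s') {x : V} {j : ℕ}
    (h : Occ s' x j) : Occ s x (j + 1) := by
  induction hs with
  | pre a t => exact ⟨j, rfl, h⟩
  | plusL u _ ih => exact .inl (ih h)
  | plusR t _ ih => exact .inr (ih h)

theorem step_subst {σ : V → TmP A V} {s s' : TmP A V} {b : A} (h : Step s b s') :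
    Step (subst σ s) b (subst σ s') := by
  induction h with
  | pre a t => exact .pre _ _
  | plusL u _ ih => exact .plusL _ ih
  | plusR t _ ih => exact .plusR _ ih

theorem step_subst_of_occ {σ : V → TmP A V} {s p : TmP A V} {x : V} {b : A} (ho : Occ s x 0)
    (h : Step (σ x) b p) : Step (subst σ s) b p := by
  induction s with
  | nil => exact ho.elim
  | var y => obtain ⟨rfl, -⟩ := ho; exact h
  | plus t u iht ihu =>
    rcases ho with ho | ho
    · exact .plusL _ (iht ho)
    · exact .plusR _ (ihu ho)
  | pre a t _ => obtain ⟨i, hi, -⟩ := ho; omega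

theorem step_subst_cases {σ : V → TmP A V} {s p : TmP A V} {b : A} (h : Step (subst σ s) b p) :
    (∃ s', Step s b s' ∧ p = subst σ s') ∨ ∃ x, Occ s x 0 ∧ Step (σ x) b p := by
  induction s with
  | nil => exact absurd h not_step_nil
  | var y => exact .inr ⟨y, ⟨rfl, rfl⟩, h⟩
  | plus t u iht ihu =>
    rcases step_plus_iff.1 h with h | h
    · rcases iht h with ⟨s', hs, hp⟩ | ⟨x, hx, hp⟩
      · exact .inl ⟨s', .plusL _ hs, hp⟩
      · exact .inr ⟨x, .inl hx, hp⟩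
    · rcases ihu h with ⟨s', hs, hp⟩ | ⟨x, hx, hp⟩
      · exact .inl ⟨s', .plusR _ hs, hp⟩
      · exact .inr ⟨x, .inr hx, hp⟩
  | pre a t _ =>
    obtain ⟨rfl, rfl⟩ := step_pre_iff.1 h
    exact .inl ⟨t, .pre _ _, rfl⟩

/-- If an instance of `s` terminates after more steps than the depth of `s`, then it does so inside
the instance of a variable. -/
theorem Ter.exists_occ {σ : V → TmP A V} {n : ℕ} {s : TmP A V} (h : Ter n (subst σ s))
    (hn : depth s < n) : ∃ y j k, Occ s y j ∧ n = (k + 1) + j ∧ Ter (k + 1) (σ y) := by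
  induction n generalizing s with
  | zero => omega
  | succ n ih =>
    obtain ⟨b, p, hs, hp⟩ := h
    rcases step_subst_cases hs with ⟨s', hs', rfl⟩ | ⟨x, hx, hs'⟩
    · have := hs'.depth_lt
      obtain ⟨y, j, k, ho, hk, ht⟩ := ih hp (by omega)
      exact ⟨y, j + 1, k, ho.of_step hs', by omega, ht⟩
    · exact ⟨x, 0, n, hx, rfl, b, p, hs', hp⟩

theorem Ter.of_occ {σ : V → TmP A V} {s : TmP A V} {y : V} {j k : ℕ} (ho : Occ s y j)
    (h : Ter (k + 1) (σ y)) : Ter (k + 1 + j) (subst σ s) := by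
  induction s generalizing j with
  | nil => exact ho.elim
  | var x => obtain ⟨rfl, rfl⟩ := ho; exact h
  | plus t u iht ihu =>
    have e : k + 1 + j = (k + j) + 1 := by omega
    rcases ho with ho | ho
    · have := iht ho
      rw [e] at this ⊢
      exact ter_succ_plus.2 (.inl this)
    · have := ihu ho
      rw [e] at this ⊢
      exact ter_succ_plus.2 (.inr this)
  | pre a t ih =>
    obtain ⟨i, rfl, ho⟩ := ho
    exact ter_succ_pre.2 (ih ho)

theorem depth_subst_of_occ {σ : V → TmP A V} {s : TmP A V} {y : V} {j : ℕ} (ho : Occ s y j) :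
    depth (σ y) ≤ depth (subst σ s) := by
  induction s generalizing j with
  | nil => exact ho.elim
  | var x => obtain ⟨rfl, rfl⟩ := ho; exact le_rfl
  | plus t u iht ihu =>
    simp only [subst, depth]
    rcases ho with ho | ho
    · exact le_max_of_le_left (iht ho)
    · exact le_max_of_le_right (ihu ho)
  | pre a t ih =>
    obtain ⟨i, rfl, ho⟩ := ho
    exact (ih ho).trans (Nat.le_succ _)

theorem depth_subst_of_nil {σ : V → TmP A V} {s : TmP A V} (h : ∀ y j, Occ s y j → σ y = nil) :
    depth (subst σ s) = depth s := by
  induction s with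
  | nil => rfl
  | var x => simp [subst, h x 0 ⟨rfl, rfl⟩, depth]
  | plus t u iht ihu =>
    simp only [subst, depth]
    rw [iht fun y j ho => h y j (.inl ho), ihu fun y j ho => h y j (.inr ho)]
  | pre a t ih =>
    simp only [subst, depth]
    rw [ih fun y j ho => h y (j + 1) ⟨j, rfl, ho⟩]

theorem closed_npre (a : A) (n : ℕ) : Closed (npre a n (nil : TmP A V)) := by
  induction n with
  | zero => rfl
  | succ n ih => exact ih

/-! ### Consequences of soundness for open terms -/

/-- Both sides of a sound equation have the same variable summands: instantiate `x` by a single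
long trace and all other variables by `nil`. -/
theorem occ_zero_of_sound [Nonempty A] {t u : TmP A V}
    (h : ∀ σ : V → TmP A V, (∀ x, Closed (σ x)) → IFeq (subst σ t) (subst σ u)) {x : V}
    (hx : Occ t x 0) : Occ u x 0 := by
  classical
  obtain ⟨a⟩ := ‹Nonempty A›
  set N := depth u + 1
  let σ : V → TmP A V := fun y => if y = x then npre a N nil else nil
  have hσ : ∀ y, Closed (σ y) := fun y => by
    by_cases hy : y = x
    · simp only [σ, hy, if_true]; exact closed_npre a N
    · simp only [σ, hy, if_false]; rfl
  have ht : Ter N (subst σ t) :=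
    Ter.of_occ hx (show Ter N (σ x) by simp only [σ, if_true]; exact ter_npre.2 rfl)
  obtain ⟨y, j, k, ho, hk, hy⟩ := (((h σ hσ).ter_iff N).1 ht).exists_occ (Nat.lt_succ_self _)
  by_cases hyx : y = x
  · subst hyx
    simp only [σ, if_true, ter_npre] at hy
    have : j = 0 := by omega
    exact this ▸ ho
  · simp only [σ, hyx, if_false] at hy
    obtain ⟨b, q, hs, -⟩ := hy
    exact absurd hs not_step_nil

/-- A transition of one side of a sound equation is answered by a transition of the other side that
introduces no new variables: instantiate the variables of `t'` by `nil` and all others by a long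
trace. -/
theorem exists_step_of_sound [Nonempty A] {t u : TmP A V}
    (h : ∀ σ : V → TmP A V, (∀ x, Closed (σ x)) → IFeq (subst σ t) (subst σ u)) {b : A}
    {t' : TmP A V} (ht : Step t b t') :
    ∃ u', Step u b u' ∧ ∀ y j, Occ u' y j → ∃ i, Occ t' y i := by
  classical
  obtain ⟨a⟩ := ‹Nonempty A›
  set M := depth t' + 1 with hM
  let σ : V → TmP A V := fun y => if ∃ i, Occ t' y i then nil else npre a (M + 1) nil
  have hσ : ∀ y, Closed (σ y) := fun y => by
    by_cases hy : ∃ i, Occ t' y i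
    · simp only [σ, hy, if_true]; rfl
    · simp only [σ, hy, if_false]; exact closed_npre a _
  have hd : depth (subst σ t') = depth t' :=
    depth_subst_of_nil fun y j ho => by
      have : ∃ i, Occ t' y i := ⟨j, ho⟩
      simp only [σ, this, if_true]
  have hi : ImpFut (subst σ t) [b] {w | M ≤ w.length} := by
    refine ⟨subst σ t', .act (step_subst ht) (.refl _), fun s hs hB => ?_⟩
    have h₁ := length_le_depth hs
    have h₂ : M ≤ s.length := hB
    omega
  obtain ⟨q, hq, hB⟩ := (h σ hσ).1 _ _ hi
  obtain ⟨r, hs, hr⟩ := traceTo_cons_iff.1 hq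
  obtain rfl := traceTo_nil_iff.1 hr
  have hdq : depth q < M := by
    obtain ⟨w, hw, hl⟩ := exists_trace_depth q
    by_contra hc
    exact hB w hw (show M ≤ w.length by omega)
  rcases step_subst_cases hs with ⟨u', hu, rfl⟩ | ⟨x, -, hx⟩
  · refine ⟨u', hu, fun y j ho => ?_⟩
    by_contra hy
    have := depth_subst_of_occ (σ := σ) ho
    simp only [σ, hy, if_false, depth_npre] at this
    simp only [σ] at hdq
    omega
  · by_cases hy : ∃ i, Occ t' x i
    · simp only [σ, hy, if_true] at hx
      exact absurd hx not_step_nil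
    · simp only [σ, hy, if_false, npre, step_pre_iff] at hx
      rw [hx.2] at hdq
      have := depth_npre (V := V) a M
      omega

/-! ### Preservation of badness -/

/-- Some transition leads to a term that does not terminate after `m` steps. -/
def Bad (m : ℕ) (p : TmP A V) : Prop := ∃ b q, Step p b q ∧ ¬ Ter m q

/-- Termination is possible only after `0`, `m + 1` or `2m + 1` steps. The value `0` is allowed in
order that summands of sparse terms be sparse. -/
def Sparse (m : ℕ) (p : TmP A V) : Prop := ∀ n, Ter n p → n = 0 ∨ n = m + 1 ∨ n = 2 * m + 1

theorem IFeq.sparse_iff {m : ℕ} {p q : TmP A V} (h : IFeq p q) : Sparse m p ↔ Sparse m q := by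
  simp only [Sparse, h.ter_iff]

theorem Sparse.left {m : ℕ} {p q : TmP A V} (h : Sparse m (plus p q)) : Sparse m p := by
  rintro (_ | n) hn
  · exact .inl rfl
  · exact h _ (ter_succ_plus.2 (.inl hn))

theorem Sparse.right {m : ℕ} {p q : TmP A V} (h : Sparse m (plus p q)) : Sparse m q := by
  rintro (_ | n) hn
  · exact .inl rfl
  · exact h _ (ter_succ_plus.2 (.inr hn))

theorem bad_plus {m : ℕ} {p q : TmP A V} : Bad m (plus p q) ↔ Bad m p ∨ Bad m q := by
  simp only [Bad, step_plus_iff, or_and_right, exists_or]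

theorem bad_pre {m : ℕ} {a : A} {p : TmP A V} : Bad m (pre a p) ↔ ¬ Ter m p := by
  simp [Bad, step_pre_iff]

/-- Closed instances of sound equations between terms of depth less than `m` transfer badness from
one side to the other, provided the instances are sparse. -/
theorem bad_of_instance [Nonempty A] {m : ℕ} {t u : TmP A V}
    (h : ∀ σ : V → TmP A V, (∀ x, Closed (σ x)) → IFeq (subst σ t) (subst σ u))
    (hdt : depth t < m) (hdu : depth u < m) (σ : V → TmP A V) (hsp : Sparse m (subst σ t))
    (hb : Bad m (subst σ t)) : Bad m (subst σ u) := by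
  obtain ⟨b, p, hs, hp⟩ := hb
  rcases step_subst_cases hs with ⟨t', ht, rfl⟩ | ⟨x, hx, hx'⟩
  · obtain ⟨u', hu, hv⟩ := exists_step_of_sound h ht
    refine ⟨b, subst σ u', step_subst hu, fun hter => hp ?_⟩
    have h₁ := hu.depth_lt
    have h₂ := ht.depth_lt
    obtain ⟨y, j, k, ho, hk, hy⟩ := hter.exists_occ (by omega)
    obtain ⟨i, hi⟩ := hv y j ho
    have hty := Ter.of_occ hi hy
    have h₃ := hi.le_depth
    have h₄ := hsp (k + 1 + i + 1) ⟨b, _, hs, hty⟩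
    -- `i < m` rules out termination of `σ t'` after `2m` steps
    have : k + 1 + i = m := by omega
    exact this ▸ hty
  · exact ⟨b, p, step_subst_of_occ (occ_zero_of_sound h hx) hx', hp⟩

/-- Derivations from sound axioms of depth less than `m` preserve badness of sparse closed terms.
Intermediate terms of a derivation may be open, hence the closed substitution `σ`. -/
theorem Deriv.bad_iff [Nonempty A] {E : TmP A V → TmP A V → Prop} {m : ℕ}
    (hE : ∀ p q, Closed p → Closed q → Deriv E p q → IFeq p q)
    (hd : ∀ t u, E t u → depth t < m ∧ depth u < m) {t u : TmP A V} (h : Deriv E t u)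
    {σ : V → TmP A V} (hσ : ∀ x, Closed (σ x)) (hsp : Sparse m (subst σ t)) :
    Bad m (subst σ t) ↔ Bad m (subst σ u) := by
  have sound : ∀ {t u : TmP A V}, Deriv E t u → ∀ σ : V → TmP A V, (∀ x, Closed (σ x)) →
      IFeq (subst σ t) (subst σ u) := fun h σ hσ =>
    hE _ _ (closed_subst hσ _) (closed_subst hσ _) (h.map_subst σ)
  have inst : ∀ {t u : TmP A V}, E t u → ∀ σ : V → TmP A V, (∀ x, Closed (σ x)) →
      Sparse m (subst σ t) → (Bad m (subst σ t) ↔ Bad m (subst σ u)) := fun {t u} h σ hσ hsp =>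
    ⟨bad_of_instance (sound (.ax h)) (hd _ _ h).1 (hd _ _ h).2 σ hsp,
      bad_of_instance (sound (.symm (.ax h))) (hd _ _ h).2 (hd _ _ h).1 σ
        ((sound (.ax h) σ hσ).sparse_iff.1 hsp)⟩
  induction h with
  | ax h => exact inst h σ hσ hsp
  | inst τ h =>
    rw [subst_subst] at *
    rw [subst_subst]
    exact inst h _ (fun x => closed_subst hσ (τ x)) hsp
  | refl t => exact Iff.rfl
  | symm h ih => exact (ih ((sound h σ hσ).sparse_iff.2 hsp)).symm
  | trans h₁ _ ih₁ ih₂ =>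
    exact (ih₁ hsp).trans (ih₂ ((sound h₁ σ hσ).sparse_iff.1 hsp))
  | pre a h _ =>
    simp only [subst, bad_pre]
    rw [(sound h σ hσ).ter_iff]
  | plus _ _ ih₁ ih₂ =>
    simp only [subst, bad_plus]
    exact or_congr (ih₁ (Sparse.left hsp)) (ih₂ (Sparse.right hsp))

/-! ### The witnessing equations -/

theorem T_npre_subset (a : A) {m n : ℕ} (h : m ≤ n) :
    T (npre a m (nil : TmP A V)) ⊆ T (npre a n (nil : TmP A V)) := by
  intro w hw
  induction w generalizing m n with
  | nil => exact nil_mem_T _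
  | cons b w ih =>
    obtain ⟨r, hs, hr⟩ := cons_mem_T.1 hw
    obtain _ | m := m
    · exact absurd hs not_step_nil
    · obtain ⟨n, rfl⟩ : ∃ k, n = k + 1 := ⟨n - 1, by omega⟩
      obtain ⟨rfl, rfl⟩ := step_pre_iff.1 hs
      exact cons_mem_T.2 ⟨_, .pre _ _, ih (by omega) hr⟩

theorem T_plus (p q : TmP A V) : T (plus p q) = T p ∪ T q := by
  ext w
  cases w with
  | nil => simp [nil_mem_T]
  | cons a w => simp only [Set.mem_union, cons_mem_T, step_plus_iff, or_and_right, exists_or]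

theorem T_pre_mono (a : A) {p q : TmP A V} (h : T p ⊆ T q) : T (pre a p) ⊆ T (pre a q) := by
  rintro (_ | ⟨b, w⟩) hw
  · exact nil_mem_T _
  · obtain ⟨r, hs, hr⟩ := cons_mem_T.1 hw
    obtain ⟨rfl, rfl⟩ := step_pre_iff.1 hs
    exact cons_mem_T.2 ⟨_, .pre _ _, h hr⟩

/-- The summand `a p` is absorbed by `a (r + p)` when all traces of `r` are traces of `p`. -/
theorem ifeq_absorb (a : A) {p r : TmP A V} (h : T r ⊆ T p) :
    IFeq (plus (pre a p) (pre a (plus r p))) (pre a (plus r p)) := by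
  have hT : T (plus r p) = T p := by rw [T_plus]; exact Set.union_eq_right.2 h
  have hT' : T (plus (pre a p) (pre a (plus r p))) = T (pre a (plus r p)) := by
    rw [T_plus]; exact Set.union_eq_right.2 (T_pre_mono a hT.ge)
  constructor
  · rintro (_ | ⟨b, w⟩) B ⟨q, hq, hB⟩
    · obtain rfl := traceTo_nil_iff.1 hq
      exact ⟨_, .refl _, hT' ▸ hB⟩
    · obtain ⟨s, hs, hw⟩ := traceTo_cons_iff.1 hq
      rcases step_plus_iff.1 hs with hs | hs
      · obtain ⟨rfl, rfl⟩ := step_pre_iff.1 hs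
        cases w with
        | nil =>
          obtain rfl := traceTo_nil_iff.1 hw
          exact ⟨_, .act (.pre _ _) (.refl _), hT.symm ▸ hB⟩
        | cons c w =>
          obtain ⟨s', hs', hw'⟩ := traceTo_cons_iff.1 hw
          exact ⟨q, .act (.pre _ _) (.act (.plusR _ hs') hw'), hB⟩
      · exact ⟨q, .act hs hw, hB⟩
  · rintro (_ | ⟨b, w⟩) B ⟨q, hq, hB⟩
    · obtain rfl := traceTo_nil_iff.1 hq
      exact ⟨_, .refl _, hT'.symm ▸ hB⟩
    · obtain ⟨s, hs, hq⟩ := traceTo_cons_iff.1 hq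
      exact ⟨q, .act (.plusR _ hs) hq, hB⟩

end TmP

/-- there is no finite axiomatization that is both sound and
ground-complete for BCCSP(A) modulo (concrete) impossible futures equivalence. -/
theorem stmt13 {A V : Type} [Nonempty A] [Countable V] [Infinite V] :
    ¬ ∃ E : Set (TmP A V × TmP A V), E.Finite ∧
      (∀ p q : TmP A V, TmP.Closed p → TmP.Closed q →
        TmP.Deriv (fun t u => (t, u) ∈ E) p q → TmP.IFeq p q) ∧
      (∀ p q : TmP A V, TmP.Closed p → TmP.Closed q →
        TmP.IFeq p q → TmP.Deriv (fun t u => (t, u) ∈ E) p q) := by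
  rintro ⟨E, hfin, hsound, hcomplete⟩
  obtain ⟨a⟩ := ‹Nonempty A›
  have : Nonempty A := ⟨a⟩
  obtain ⟨m₀, hm₀⟩ := (hfin.image fun e => max (TmP.depth e.1) (TmP.depth e.2)).bddAbove
  set m := m₀ + 1 with hm
  have hd : ∀ t u, (t, u) ∈ E → TmP.depth t < m ∧ TmP.depth u < m := by
    intro t u h
    have : max (TmP.depth t) (TmP.depth u) ≤ m₀ := hm₀ ⟨(t, u), h, rfl⟩
    omega
  let P : TmP A V := TmP.npre a (2 * m) .nil
  let R : TmP A V := .pre a (.plus (TmP.npre a m .nil) P)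
  let L : TmP A V := .plus (.pre a P) R
  have hLR : TmP.IFeq L R := TmP.ifeq_absorb a (TmP.T_npre_subset a (by omega))
  have cP : TmP.Closed P := TmP.closed_npre a _
  have cR : TmP.Closed R := by
    have h := TmP.closed_npre (V := V) a m
    simp only [TmP.Closed, R, TmP.vars, Set.union_empty_iff] at *
    exact ⟨h, cP⟩
  have cL : TmP.Closed L := by
    simp only [TmP.Closed, L, TmP.vars, Set.union_empty_iff] at *
    exact ⟨cP, cR⟩
  have hsp : TmP.Sparse m R := by
    rintro (_ | _ | n) hn
    · exact .inl rfl
    · -- `a^m + a^{2m}` has a transition, as `m` is positive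
      exact absurd (.plusL _ (.pre _ _)) (TmP.ter_succ_pre.1 hn a (TmP.npre a m₀ .nil))
    · rcases TmP.ter_succ_plus.1 (TmP.ter_succ_pre.1 hn) with h | h
      · have := TmP.ter_npre.1 h
        omega
      · have := TmP.ter_npre.1 h
        omega
  have bL : TmP.Bad m L := TmP.bad_plus.2 <| .inl <| TmP.bad_pre.2 fun h => by
    have := TmP.ter_npre.1 h
    omega
  have bR : ¬ TmP.Bad m R := fun h =>
    TmP.bad_pre.1 h (TmP.ter_succ_plus.2 (.inl (TmP.ter_npre.2 rfl)))
  have key := TmP.Deriv.bad_iff hsound hd (hcomplete L R cL cR hLR)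
    (σ := fun _ => TmP.nil) (fun _ => rfl)
  rw [TmP.subst_of_closed _ cL, TmP.subst_of_closed _ cR] at key
  exact bR ((key (hLR.sparse_iff.2 hsp)).1 bL)
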